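/- arXiv:1910.10692 — 2 statements merged into one kernel-verified Lean document; each statement's English description precedes it below -/
import Mathlib

section
/- Let t ≥ 2 and let T be an order-t real tensor. Then the sign nuclear norm and max-quasinorm satisfy ‖T‖_± ≤ K_G^{t−1}·‖T‖_max, where K_G ≤ 1.783 is Grothendieck's constant over ℝ; in particular ‖T‖_± ≤ 1.783^{t−1}·‖T‖_max. -/
open Classical

/-- `‖U‖_{2,∞}`: the maximum ℓ2-norm of a row of `U`. -/
noncomputable def rowTwoInf {α : Type*} {r : ℕ} (U : α → Fin r → ℝ) : ℝ :=
  ⨆ a : α, Real.sqrt (∑ l, (U a l) ^ 2)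

/-- The max-quasinorm of an order-`t` tensor. -/
noncomputable def maxQnorm {t : ℕ} {n : Fin t → ℕ}
    (T : ((i : Fin t) → Fin (n i)) → ℝ) : ℝ :=
  sInf { c : ℝ | ∃ (r : ℕ) (U : (i : Fin t) → Fin (n i) → Fin r → ℝ),
    (∀ x, T x = ∑ l : Fin r, ∏ i, U i (x i) l) ∧ c = ∏ i, rowTwoInf (U i) }

/-- The sign nuclear norm (atomic M-norm): the infimum of `∑ |αⱼ|` over all
decompositions `T = ∑ⱼ αⱼ Sⱼ` into rank-one sign tensors
`Sⱼ = s_{j,1} ∘ ⋯ ∘ s_{j,t}` with `s_{j,i} ∈ {±1}^{nᵢ}`. -/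
noncomputable def signNuclearNorm {t : ℕ} {n : Fin t → ℕ}
    (T : ((i : Fin t) → Fin (n i)) → ℝ) : ℝ :=
  sInf { c : ℝ | ∃ (r : ℕ) (a : Fin r → ℝ) (s : Fin r → (i : Fin t) → Fin (n i) → ℝ),
    (∀ j i x, s j i x = 1 ∨ s j i x = -1) ∧
    (∀ x, T x = ∑ j, a j * ∏ i, s j i (x i)) ∧ c = ∑ j, |a j| }

/-! By homogeneity, let all rows of the factors `U⁽ⁱ⁾` lie in the unit ball. A matrix of inner
products of vectors in the unit ball lies in `K` times the convex hull of the rank-one sign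
matrices, for any constant `K` in Grothendieck's inequality. Splitting the factors off one at a
time by this rounding, and using it a last time on the order-two tensor that remains, writes `T`
as `K ^ (t - 1)` times a convex combination of rank-one sign tensors.

The value `K = π / (2 arsinh 1) < 1.783` is Krivine's. If `X` and `Y` are jointly Gaussian,
centered, of variance one, then `E[sign X sign Y] = (2 / π) arcsin E[X Y]`, so the matrix `⟪u, v⟫`
is `K` times a mean of sign matrices once `sin (c ⟪u, v⟫)`, with `c = arsinh 1`, is the cross
covariance of a Gaussian vector with unit variances. It is, because applying `sinh` to the diagonal
blocks and `sin` to the off-diagonal blocks of `c` times a Gram matrix keeps it positive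
semidefinite, and its diagonal entries are at most `sinh c = 1`. -/

open MeasureTheory ProbabilityTheory Real

open scoped RealInnerProductSpace Matrix Pointwise

/-- The rank-one sign matrices `s s'ᵀ`, the targets of Grothendieck rounding. -/
def signMatrices (α β : Type*) : Set (α → β → ℝ) :=
  {S | ∃ (s : α → ℝ) (s' : β → ℝ), (∀ a, s a = 1 ∨ s a = -1) ∧ (∀ b, s' b = 1 ∨ s' b = -1) ∧
    S = fun a b => s a * s' b}

/-- `K` is an admissible constant in Grothendieck's inequality over `ℝ`; the least one is `K_G`.
This is the primal form, dual by Hahn–Banach to the usual bound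
`|∑ Aₐᵦ ⟪uₐ, vᵦ⟫| ≤ K sup |∑ Aₐᵦ sₐ s'ᵦ|`. The convex hull is symmetric, hence the clause
`0 ≤ K`. -/
def IsGrothendieckConstant (K : ℝ) : Prop :=
  0 ≤ K ∧ ∀ (α β E : Type) [Finite α] [Finite β] [NormedAddCommGroup E] [InnerProductSpace ℝ E]
    (u : α → E) (v : β → E), (∀ a, ‖u a‖ ≤ 1) → (∀ b, ‖v b‖ ≤ 1) →
      (fun a b => ⟪u a, v b⟫) ∈ K • convexHull ℝ (signMatrices α β)

/-! ### Grothendieck's identity -/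

/-- The sign function with the value `1` at `0`, so that all its values are signs. It rounds
Gaussian vectors to sign vectors. -/
noncomputable def unitSign (x : ℝ) : ℝ := if 0 ≤ x then 1 else -1

lemma unitSign_eq_one_or_neg_one (x : ℝ) : unitSign x = 1 ∨ unitSign x = -1 :=
  ite_eq_or_eq _ _ _

lemma unitSign_of_nonneg {x : ℝ} (hx : 0 ≤ x) : unitSign x = 1 := if_pos hx

lemma unitSign_of_neg {x : ℝ} (hx : x < 0) : unitSign x = -1 := if_neg hx.not_ge

lemma abs_unitSign (x : ℝ) : |unitSign x| = 1 :=
  (abs_eq zero_le_one).2 (unitSign_eq_one_or_neg_one x)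

lemma unitSign_mul_of_pos {r : ℝ} (hr : 0 < r) (x : ℝ) : unitSign (r * x) = unitSign x := by
  simp only [unitSign, mul_nonneg_iff_of_pos_left hr]

@[fun_prop]
lemma measurable_unitSign : Measurable unitSign :=
  Measurable.ite measurableSet_Ici measurable_const measurable_const

lemma intervalIntegrable_unitSign_comp {f : ℝ → ℝ} (hf : Measurable f) (a b : ℝ) :
    IntervalIntegrable (fun x => unitSign (f x)) volume a b :=
  (intervalIntegrable_const (c := (1 : ℝ))).mono_fun
    (Measurable.aestronglyMeasurable (by fun_prop)) (.of_forall fun x => by simp [abs_unitSign])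

lemma integral_unitSign_sin {b c : ℝ} (hb : b ∈ Set.Icc (-π) 0) (hc : c ∈ Set.Icc 0 π) :
    ∫ x in b..c, unitSign (sin x) = b + c := by
  have hint := intervalIntegrable_unitSign_comp measurable_sin
  have hneg : ∫ x in b..0, unitSign (sin x) = ∫ x in b..0, -1 := by
    refine intervalIntegral.integral_congr_uIoo fun x hx => unitSign_of_neg ?_
    rw [Set.uIoo_of_le hb.2] at hx
    exact sin_neg_of_neg_of_neg_pi_lt hx.2 (hb.1.trans_lt hx.1)
  have hpos : ∫ x in 0..c, unitSign (sin x) = ∫ x in 0..c, 1 := by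
    refine intervalIntegral.integral_congr_uIoo fun x hx => unitSign_of_nonneg ?_
    rw [Set.uIoo_of_le hc.1] at hx
    exact sin_nonneg_of_nonneg_of_le_pi hx.1.le (hx.2.le.trans hc.2)
  rw [← intervalIntegral.integral_add_adjacent_intervals (hint b 0) (hint 0 c), hneg, hpos]
  simp

lemma integral_unitSign_cos_mul {g : ℝ → ℝ} (hg : ∀ y z, IntervalIntegrable g volume y z)
    (hper : Function.Periodic g (2 * π)) :
    ∫ x in -π..π, unitSign (cos x) * g x =
      2 * (∫ x in -(π / 2)..π / 2, g x) - ∫ x in -π..π, g x := by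
  have hpi := pi_pos
  let f x := unitSign (cos x) * g x
  have hf (y z : ℝ) : IntervalIntegrable f volume y z :=
    (hg y z).mono_fun
      ((Measurable.aestronglyMeasurable (by fun_prop)).mul (hg y z).def'.aestronglyMeasurable)
      (.of_forall fun x => by simp [f, abs_unitSign])
  have hfper : Function.Periodic f (2 * π) := fun x => by simp only [f, cos_add_two_pi, hper x]
  have hleft : ∫ x in -(π / 2)..π / 2, f x = ∫ x in -(π / 2)..π / 2, g x := by
    refine intervalIntegral.integral_congr_uIoo fun x hx => ?_
    rw [Set.uIoo_of_le (by linarith)] at hx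
    simp only [f, unitSign_of_nonneg (cos_pos_of_mem_Ioo hx).le, one_mul]
  have hright : ∫ x in π / 2..-(π / 2) + 2 * π, f x = -∫ x in π / 2..-(π / 2) + 2 * π, g x := by
    rw [← intervalIntegral.integral_neg]
    refine intervalIntegral.integral_congr_uIoo fun x hx => ?_
    rw [Set.uIoo_of_le (by linarith)] at hx
    simp only [f, unitSign_of_neg (cos_neg_of_pi_div_two_lt_of_lt hx.1 (by linarith [hx.2])),
      neg_one_mul]
  have hfsplit := intervalIntegral.integral_add_adjacent_intervals
    (hf (-(π / 2)) (π / 2)) (hf (π / 2) (-(π / 2) + 2 * π))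
  have hgsplit := intervalIntegral.integral_add_adjacent_intervals
    (hg (-(π / 2)) (π / 2)) (hg (π / 2) (-(π / 2) + 2 * π))
  have hfshift := hfper.intervalIntegral_add_eq (-π) (-(π / 2))
  have hgshift := hper.intervalIntegral_add_eq (-π) (-(π / 2))
  rw [show -π + 2 * π = π by ring] at hfshift hgshift
  linarith

lemma integral_unitSign_cos_mul_unitSign_sin_add {a : ℝ} (ha : a ∈ Set.Icc (-(π / 2)) (π / 2)) :
    ∫ x in -π..π, unitSign (cos x) * unitSign (sin (x + a)) = 4 * a := by
  have hper : Function.Periodic (fun x => unitSign (sin x)) (2 * π) := sin_periodic.comp unitSign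
  have hhalf : ∫ x in -(π / 2)..π / 2, unitSign (sin (x + a)) = 2 * a := by
    rw [intervalIntegral.integral_comp_add_right fun x => unitSign (sin x),
      integral_unitSign_sin ⟨by linarith [ha.1], by linarith [ha.2]⟩
        ⟨by linarith [ha.1], by linarith [ha.2]⟩]
    ring
  have hfull : ∫ x in -π..π, unitSign (sin (x + a)) = 0 := by
    have hshift := hper.intervalIntegral_add_eq (-π + a) (-π)
    rw [show -π + a + 2 * π = π + a by ring, show -π + 2 * π = π by ring] at hshift
    rw [intervalIntegral.integral_comp_add_right fun x => unitSign (sin x), hshift,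
      integral_unitSign_sin ⟨le_rfl, by linarith [pi_pos]⟩ ⟨pi_pos.le, le_rfl⟩, neg_add_cancel]
  rw [integral_unitSign_cos_mul (intervalIntegrable_unitSign_comp (by fun_prop))
    (hper.add_const a), hhalf, hfull]
  ring

lemma integral_Ioi_mul_exp_neg_sq_div_two :
    ∫ r in Set.Ioi (0 : ℝ), r * rexp (-(r ^ 2 / 2)) = 1 := by
  have h := integral_rpow_mul_exp_neg_mul_rpow (p := 2) (q := 1) (b := 1 / 2)
    (by norm_num) (by norm_num) (by norm_num)
  norm_num [rpow_neg_one] at h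
  simpa only [one_div_mul_eq_div] using h

lemma gaussianPDFReal_mul_gaussianPDFReal (x y : ℝ) :
    gaussianPDFReal 0 1 x * gaussianPDFReal 0 1 y = (2 * π)⁻¹ * rexp (-((x ^ 2 + y ^ 2) / 2)) := by
  have hsqrt : (√(2 * π))⁻¹ * (√(2 * π))⁻¹ = (2 * π)⁻¹ := by
    rw [← mul_inv, mul_self_sqrt (by positivity)]
  simp only [gaussianPDFReal, NNReal.coe_one, mul_one, sub_zero]
  rw [mul_mul_mul_comm, hsqrt, ← exp_add]
  ring_nf

lemma integral_gaussianReal_prod_of_homogeneous {f : ℝ × ℝ → ℝ}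
    (hf : ∀ r : ℝ, 0 < r → ∀ p, f (r • p) = f p) :
    ∫ p, f p ∂((gaussianReal 0 1).prod (gaussianReal 0 1)) =
      (2 * π)⁻¹ * ∫ x in -π..π, f (cos x, sin x) := by
  have hpolar : ∀ p ∈ Set.Ioi (0 : ℝ) ×ˢ Set.Ioo (-π) π,
      p.1 • (gaussianPDF 0 1 (polarCoord.symm p).1 * gaussianPDF 0 1 (polarCoord.symm p).2).toReal •
        f (polarCoord.symm p) =
      p.1 * rexp (-(p.1 ^ 2 / 2)) * ((2 * π)⁻¹ * f (cos p.2, sin p.2)) := by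
    rintro ⟨r, x⟩ ⟨hr, -⟩
    have hfr : f (r * cos x, r * sin x) = f (cos x, sin x) := hf r hr (cos x, sin x)
    have hsq : (r * cos x) ^ 2 + (r * sin x) ^ 2 = r ^ 2 := by
      linear_combination r ^ 2 * cos_sq_add_sin_sq x
    simp only [polarCoord_symm_apply, ENNReal.toReal_mul, toReal_gaussianPDF,
      gaussianPDFReal_mul_gaussianPDFReal, hfr, hsq, smul_eq_mul]
    ring
  rw [gaussianReal_of_var_ne_zero _ one_ne_zero,
    prod_withDensity (measurable_gaussianPDF _ _) (measurable_gaussianPDF _ _),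
    integral_withDensity_eq_integral_toReal_smul (by fun_prop)
      (.of_forall fun _ => ENNReal.mul_lt_top gaussianPDF_lt_top gaussianPDF_lt_top),
    ← Measure.volume_eq_prod, ← integral_comp_polarCoord_symm, polarCoord_target,
    setIntegral_congr_fun (measurableSet_Ioi.prod measurableSet_Ioo) hpolar,
    Measure.volume_eq_prod, setIntegral_prod_mul (fun r => r * rexp (-(r ^ 2 / 2)))
      (fun x => (2 * π)⁻¹ * f (cos x, sin x)),
    integral_Ioi_mul_exp_neg_sq_div_two, one_mul, integral_const_mul,
    ← integral_Ioc_eq_integral_Ioo, intervalIntegral.integral_of_le (by linarith [pi_pos])]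

lemma integral_gaussianReal_prod_unitSign_mul_unitSign {a : ℝ}
    (ha : a ∈ Set.Icc (-(π / 2)) (π / 2)) :
    ∫ p, unitSign p.1 * unitSign (sin a * p.1 + cos a * p.2)
      ∂((gaussianReal 0 1).prod (gaussianReal 0 1)) = 2 / π * a := by
  have hangle (x : ℝ) : sin a * cos x + cos a * sin x = sin (x + a) := by
    rw [sin_add]
    ring
  rw [integral_gaussianReal_prod_of_homogeneous fun r hr p => by
    simp only [Prod.smul_fst, Prod.smul_snd, smul_eq_mul, mul_left_comm _ r, ← mul_add,
      unitSign_mul_of_pos hr]]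
  simp only [hangle]
  rw [integral_unitSign_cos_mul_unitSign_sin_add ha]
  field_simp
  norm_num

lemma exists_indepFun_eq_sin_mul_add_cos_mul {Ω : Type*} [MeasurableSpace Ω] {P : Measure Ω}
    {X Y : Ω → ℝ} (hXY : HasGaussianLaw (fun ω => (X ω, Y ω)) P)
    (hX : HasLaw X (gaussianReal 0 1) P) (hY : HasLaw Y (gaussianReal 0 1) P) {a : ℝ}
    (hcos : cos a ≠ 0) (hcov : cov[X, Y; P] = sin a) :
    ∃ Z, HasLaw Z (gaussianReal 0 1) P ∧ X ⟂ᵢ[P] Z ∧ ∀ ω, Y ω = sin a * X ω + cos a * Z ω := by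
  have := hXY.isProbabilityMeasure
  have hXmem := hXY.fst.memLp_two
  have hYmem := hXY.snd.memLp_two
  have hXmean : P[X] = 0 := by rw [hX.integral_eq, integral_id_gaussianReal]
  have hYmean : P[Y] = 0 := by rw [hY.integral_eq, integral_id_gaussianReal]
  have hXvar : Var[X; P] = 1 := by rw [hX.variance_eq, variance_id_gaussianReal, NNReal.coe_one]
  have hYvar : Var[Y; P] = 1 := by rw [hY.variance_eq, variance_id_gaussianReal, NNReal.coe_one]
  let Z : Ω → ℝ := (cos a)⁻¹ • (Y - sin a • X)
  have hXZ : HasGaussianLaw (fun ω => (X ω, Z ω)) P := hXY.map_fun <|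
    (ContinuousLinearMap.fst ℝ ℝ ℝ).prod
      ((cos a)⁻¹ • (ContinuousLinearMap.snd ℝ ℝ ℝ - sin a • ContinuousLinearMap.fst ℝ ℝ ℝ))
  have hZmean : P[Z] = 0 := by
    simp only [Z, Pi.smul_apply, Pi.sub_apply, smul_eq_mul]
    rw [integral_const_mul, integral_sub hXY.snd.integrable (hXY.fst.integrable.const_mul _),
      integral_const_mul, hXmean, hYmean, mul_zero, sub_zero, mul_zero]
  have hZvar : Var[Z; P] = 1 := by
    rw [variance_smul, variance_sub hYmem (hXmem.const_smul _), variance_smul,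
      covariance_smul_right, covariance_comm, hcov, hXvar, hYvar, inv_pow,
      inv_mul_eq_one₀ (pow_ne_zero 2 hcos)]
    linear_combination sin_sq_add_cos_sq a
  have hXZcov : cov[X, Z; P] = 0 := by
    rw [covariance_smul_right, covariance_sub_right hXmem hYmem (hXmem.const_smul _),
      covariance_smul_right, covariance_self hX.aemeasurable, hXvar, hcov]
    ring
  refine ⟨Z, ⟨hXZ.snd.aemeasurable, ?_⟩, hXZ.indepFun_of_covariance_eq_zero hXZcov, fun ω => ?_⟩
  · rw [hXZ.snd.map_eq_gaussianReal, hZmean, hZvar, toNNReal_one]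
  · simp [Z, mul_inv_cancel_left₀ hcos]

theorem integral_unitSign_mul_unitSign_of_covariance_eq_sin {Ω : Type*} [MeasurableSpace Ω]
    {P : Measure Ω} {X Y : Ω → ℝ} (hXY : HasGaussianLaw (fun ω => (X ω, Y ω)) P)
    (hX : HasLaw X (gaussianReal 0 1) P) (hY : HasLaw Y (gaussianReal 0 1) P) {a : ℝ}
    (ha : a ∈ Set.Ioo (-(π / 2)) (π / 2)) (hcov : cov[X, Y; P] = sin a) :
    ∫ ω, unitSign (X ω) * unitSign (Y ω) ∂P = 2 / π * a := by
  have := hXY.isProbabilityMeasure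
  obtain ⟨Z, hZ, hXZ, hYZ⟩ :=
    exists_indepFun_eq_sin_mul_add_cos_mul hXY hX hY (cos_pos_of_mem_Ioo ha).ne' hcov
  simp only [hYZ]
  rw [← integral_gaussianReal_prod_unitSign_mul_unitSign (Set.Ioo_subset_Icc_self ha)]
  exact (hXZ.hasLaw_prod hX hZ).integral_comp
    (f := fun p => unitSign p.1 * unitSign (sin a * p.1 + cos a * p.2))
    (Measurable.aestronglyMeasurable (by fun_prop))

lemma integral_multivariateGaussian_unitSign_mul_unitSign {ι : Type*} [Fintype ι]
    [DecidableEq ι] {S : Matrix ι ι ℝ} (hS : S.PosSemidef) {i j : ι} (hi : S i i = 1)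
    (hj : S j j = 1) {a : ℝ} (ha : a ∈ Set.Ioo (-(π / 2)) (π / 2)) (hij : S i j = sin a) :
    ∫ x, unitSign (x i) * unitSign (x j) ∂(multivariateGaussian 0 S) = 2 / π * a := by
  have hlaw {k : ι} (hk : S k k = 1) :
      HasLaw (fun x : EuclideanSpace ℝ ι => x k) (gaussianReal 0 1) (multivariateGaussian 0 S) := by
    simpa [hk] using (measurePreserving_eval_multivariateGaussian (μ := 0) hS (i := k)).hasLaw
  have hgauss : HasGaussianLaw (fun x : EuclideanSpace ℝ ι => (x i, x j))
      (multivariateGaussian 0 S) :=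
    IsGaussian.hasGaussianLaw_id.map_fun
      ((EuclideanSpace.proj i : EuclideanSpace ℝ ι →L[ℝ] ℝ).prod (EuclideanSpace.proj j))
  exact integral_unitSign_mul_unitSign_of_covariance_eq_sin hgauss (hlaw hi) (hlaw hj) ha
    ((covariance_eval_multivariateGaussian hS i j).trans hij)

/-! ### Krivine's bound -/

lemma posSemidef_map_pow {ι : Type*} [Finite ι] {A : Matrix ι ι ℝ} (hA : A.PosSemidef) (m : ℕ) :
    (A.map (· ^ m)).PosSemidef := by
  induction m with
  | zero =>
    have hone : A.map (· ^ 0) = Matrix.vecMulVec 1 (star 1) := by ext; simp [Matrix.vecMulVec]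
    exact hone ▸ Matrix.posSemidef_vecMulVec_self_star 1
  | succ m ih =>
    have hsucc : A.map (· ^ (m + 1)) = (A.map (· ^ m)).hadamard A := by ext; simp [pow_succ]
    exact hsucc ▸ ih.hadamard hA

lemma posSemidef_of_hasSum {ι κ : Type*} [Finite ι] {Q : κ → Matrix ι ι ℝ} {A : Matrix ι ι ℝ}
    (hQ : ∀ k, (Q k).PosSemidef) (hA : ∀ i j, HasSum (fun k => Q k i j) (A i j)) :
    A.PosSemidef := by
  have := Fintype.ofFinite ι
  refine .of_dotProduct_mulVec_nonneg ?_ fun z => ?_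
  · ext i j
    exact (hA j i).unique (by simpa only [← (hQ _).1.apply j i, star_trivial] using hA i j)
  · have hsum : HasSum (fun k => star z ⬝ᵥ Q k *ᵥ z) (star z ⬝ᵥ A *ᵥ z) :=
      hasSum_sum fun i _ => (hasSum_sum fun j _ => (hA i j).mul_right _).mul_left _
    exact hsum.nonneg fun k => (hQ k).dotProduct_mulVec_nonneg z

theorem posSemidef_fromBlocks_sinh_sin {α β : Type*} [Finite α] [Finite β] {A : Matrix α α ℝ}
    {B : Matrix α β ℝ} {C : Matrix β α ℝ} {D : Matrix β β ℝ}
    (h : (Matrix.fromBlocks A B C D).PosSemidef) :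
    (Matrix.fromBlocks (A.map sinh) (B.map sin) (C.map sin) (D.map sinh)).PosSemidef := by
  -- The series of `sinh` and `sin` differ by the signs `(-1) ^ k`, which the Schur product with the
  -- positive semidefinite matrix `ε k (ε k)ᵀ` puts into the off-diagonal blocks only.
  let ε (k : ℕ) : α ⊕ β → ℝ := Sum.elim 1 ((-1) ^ k)
  refine posSemidef_of_hasSum (Q := fun k => ((2 * k + 1).factorial : ℝ)⁻¹ •
    ((Matrix.fromBlocks A B C D).map (· ^ (2 * k + 1))).hadamard
      (Matrix.vecMulVec (ε k) (star (ε k))))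
    (fun k => ((posSemidef_map_pow h _).hadamard
      (Matrix.posSemidef_vecMulVec_self_star _)).smul (by positivity)) ?_
  rintro (i | i) (j | j)
  · simpa [ε, Matrix.vecMulVec, div_eq_inv_mul] using hasSum_sinh (A i j)
  · simpa [ε, Matrix.vecMulVec, div_eq_inv_mul, mul_comm, mul_left_comm] using hasSum_sin (B i j)
  · simpa [ε, Matrix.vecMulVec, div_eq_inv_mul, mul_comm, mul_left_comm] using hasSum_sin (C i j)
  · simpa [ε, Matrix.vecMulVec, div_eq_inv_mul, ← mul_pow] using hasSum_sinh (D i j)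

lemma exists_posSemidef_eq_sin_inner {α β E : Type*} [Finite α] [Finite β]
    [NormedAddCommGroup E] [InnerProductSpace ℝ E] {u : α → E} {v : β → E} (hu : ∀ a, ‖u a‖ ≤ 1)
    (hv : ∀ b, ‖v b‖ ≤ 1) {c : ℝ} (hc : 0 ≤ c) (hsinh : sinh c ≤ 1) :
    ∃ S : Matrix (α ⊕ β) (α ⊕ β) ℝ, S.PosSemidef ∧ (∀ p, S p p = 1) ∧
      ∀ a b, S (.inl a) (.inr b) = sin (c * ⟪u a, v b⟫) := by
  let G := c • Matrix.gram ℝ (Sum.elim u v)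
  have hG : (Matrix.fromBlocks G.toBlocks₁₁ G.toBlocks₁₂ G.toBlocks₂₁ G.toBlocks₂₂).PosSemidef := by
    rw [Matrix.fromBlocks_toBlocks]
    exact (Matrix.posSemidef_gram ℝ _).smul hc
  have hdiag (p) : sinh (G p p) ≤ 1 := by
    have hnorm : ‖Sum.elim u v p‖ ≤ 1 := p.rec hu hv
    refine (sinh_le_sinh.2 ?_).trans hsinh
    simpa [G] using mul_le_of_le_one_right hc (pow_le_one₀ (norm_nonneg _) hnorm)
  refine ⟨Matrix.fromBlocks (G.toBlocks₁₁.map sinh) (G.toBlocks₁₂.map sin) (G.toBlocks₂₁.map sin)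
    (G.toBlocks₂₂.map sinh) + Matrix.diagonal fun p => 1 - sinh (G p p),
    (posSemidef_fromBlocks_sinh_sin hG).add
      (.diagonal fun p => sub_nonneg.2 (hdiag p)), ?_, fun a b => ?_⟩
  · rintro (a | b) <;> simp [Matrix.toBlocks₁₁, Matrix.toBlocks₂₂]
  · simp [Matrix.toBlocks₁₂, G]

lemma finite_signMatrices (α β : Type*) [Finite α] [Finite β] : (signMatrices α β).Finite := by
  have hα := Set.Finite.pi' fun _ : α => Set.toFinite {(1 : ℝ), -1}
  have hβ := Set.Finite.pi' fun _ : β => Set.toFinite {(1 : ℝ), -1}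
  refine (hα.image2 (fun s s' a b => s a * s' b) hβ).subset ?_
  rintro _ ⟨s, s', hs, hs', rfl⟩
  exact ⟨s, hs, s', hs', rfl⟩

lemma integral_mem_convexHull_signMatrices {α β Ω : Type*} [Finite α] [Finite β]
    [MeasurableSpace Ω] {P : Measure Ω} [IsProbabilityMeasure P] {s : α → Ω → ℝ} {s' : β → Ω → ℝ}
    (hs : ∀ a ω, s a ω = 1 ∨ s a ω = -1) (hs' : ∀ b ω, s' b ω = 1 ∨ s' b ω = -1)
    (hsm : ∀ a, Measurable (s a)) (hsm' : ∀ b, Measurable (s' b)) :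
    (fun a b => ∫ ω, s a ω * s' b ω ∂P) ∈ convexHull ℝ (signMatrices α β) := by
  have := Fintype.ofFinite α
  have := Fintype.ofFinite β
  let R (ω : Ω) (a : α) (b : β) : ℝ := s a ω * s' b ω
  have hR (a b) : Integrable (R · a b) P :=
    .of_bound ((hsm a).mul (hsm' b)).aestronglyMeasurable 1 (.of_forall fun ω => by
      rcases hs a ω with h | h <;> rcases hs' b ω with h' | h' <;> simp [R, h, h'])
  have hR' (a) : Integrable (R · a) P := .of_eval (hR a)
  have hmem : ∫ ω, R ω ∂P ∈ convexHull ℝ (signMatrices α β) :=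
    (convex_convexHull ℝ _).integral_mem ((finite_signMatrices α β).isClosed_convexHull ℝ)
      (.of_forall fun ω => subset_convexHull ℝ _
        ⟨fun a => s a ω, fun b => s' b ω, fun a => hs a ω, fun b => hs' b ω, rfl⟩)
      (.of_eval hR')
  convert hmem using 1
  ext a b
  rw [eval_integral hR', eval_integral (hR a)]

theorem isGrothendieckConstant_of_sinh_le_one {K : ℝ} (hK : 0 < K)
    (hsinh : sinh (π / (2 * K)) ≤ 1) : IsGrothendieckConstant K := by
  refine ⟨hK.le, fun α β E _ _ _ _ u v hu hv => ?_⟩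
  have := Fintype.ofFinite α
  have := Fintype.ofFinite β
  set c := π / (2 * K) with hc_def
  have hc : 0 ≤ c := by positivity
  have hc_le : c ≤ 1 := (self_le_sinh_iff.2 hc).trans hsinh
  obtain ⟨S, hS, hdiag, hsin⟩ := exists_posSemidef_eq_sin_inner hu hv hc hsinh
  have hangle (a b) : c * ⟪u a, v b⟫ ∈ Set.Ioo (-(π / 2)) (π / 2) := by
    have hinner : |⟪u a, v b⟫| ≤ 1 :=
      (abs_real_inner_le_norm _ _).trans (mul_le_one₀ (hu a) (norm_nonneg _) (hv b))
    refine abs_lt.1 (lt_of_le_of_lt ?_ (show 1 < π / 2 by linarith [pi_gt_three]))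
    rw [abs_mul, abs_of_nonneg hc]
    exact mul_le_one₀ hc_le (abs_nonneg _) hinner
  have hhull := integral_mem_convexHull_signMatrices (P := multivariateGaussian 0 S)
    (fun (a : α) x => unitSign_eq_one_or_neg_one (x (.inl a)))
    (fun (b : β) x => unitSign_eq_one_or_neg_one (x (.inr b)))
    (fun a => by fun_prop) (fun b => by fun_prop)
  refine ⟨_, hhull, ?_⟩
  ext a b
  simp only [Pi.smul_apply, smul_eq_mul, integral_multivariateGaussian_unitSign_mul_unitSign hS
    (hdiag _) (hdiag _) (hangle a b) (hsin a b), hc_def]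
  field_simp

lemma sinh_le_one_of_le {x : ℝ} (hx : x ≤ 0.881) : sinh x ≤ 1 := by
  refine (sinh_le_sinh.2 hx).trans ?_
  -- `sinh x = 1` when `exp x = 1 + √2`, which is just above `2.4142`.
  have hexp : rexp 0.881 ≤ 2.4142 := by
    refine (exp_bound' (by norm_num) (by norm_num) (n := 8) (by norm_num)).trans ?_
    norm_num [Finset.sum_range_succ, Nat.factorial]
  have hexp_neg : (2.4142 : ℝ)⁻¹ ≤ rexp (-0.881) := by
    rw [exp_neg]
    exact inv_anti₀ (exp_pos _) hexp
  rw [sinh_eq]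
  norm_num at hexp_neg hexp ⊢
  linarith

lemma isGrothendieckConstant_krivine : IsGrothendieckConstant 1.783 := by
  refine isGrothendieckConstant_of_sinh_le_one (by norm_num) (sinh_le_one_of_le ?_)
  rw [div_le_iff₀ (by norm_num)]
  linarith [pi_lt_d4]

/-! ### Rounding tensors -/

/-- The rank-one sign tensors `s₁ ∘ ⋯ ∘ sₜ`, the atoms of the sign nuclear norm. -/
def signTensors {ι : Type*} [Fintype ι] (κ : ι → Type*) : Set ((∀ i, κ i) → ℝ) :=
  {S | ∃ s : ∀ i, κ i → ℝ, (∀ i x, s i x = 1 ∨ s i x = -1) ∧ S = fun x => ∏ i, s i (x i)}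

lemma mapsTo_smul_convexHull {E F : Type*} [AddCommGroup E] [Module ℝ E] [AddCommGroup F]
    [Module ℝ F] {f : E →ₗ[ℝ] F} {S : Set E} {T : Set F} {d : ℝ}
    (hf : S.MapsTo f (d • convexHull ℝ T)) (c : ℝ) :
    (c • convexHull ℝ S).MapsTo f ((c * d) • convexHull ℝ T) := by
  rintro _ ⟨x, hx, rfl⟩
  have hfx : f x ∈ d • convexHull ℝ T :=
    convexHull_min hf (((convex_convexHull ℝ T).smul d).linear_preimage f) hx
  simpa only [map_smul, mul_smul] using Set.smul_mem_smul_set hfx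

/-- Prepending the factor `s`, as the linear map `T ↦ s ∘ T`. It raises the order of a tensor by
one in the induction on the order. -/
def consTensor {t : ℕ} {κ : Fin (t + 1) → Type*} (s : κ 0 → ℝ) :
    ((∀ i : Fin t, κ i.succ) → ℝ) →ₗ[ℝ] (∀ i, κ i) → ℝ where
  toFun T x := s (x 0) * T (Fin.tail x)
  map_add' T T' := by ext; simp [mul_add]
  map_smul' c T := by ext; simp [mul_left_comm]

lemma consTensor_mem_smul_convexHull {t : ℕ} {κ : Fin (t + 1) → Type*} {s : κ 0 → ℝ}
    (hs : ∀ a, s a = 1 ∨ s a = -1) {c : ℝ} {T : (∀ i : Fin t, κ i.succ) → ℝ}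
    (hT : T ∈ c • convexHull ℝ (signTensors fun i : Fin t => κ i.succ)) :
    consTensor s T ∈ c • convexHull ℝ (signTensors κ) := by
  have hsign : (signTensors fun i : Fin t => κ i.succ).MapsTo (consTensor s)
      ((1 : ℝ) • convexHull ℝ (signTensors κ)) := by
    rintro _ ⟨s', hs', rfl⟩
    rw [one_smul]
    refine subset_convexHull ℝ _ ⟨Fin.cons (α := fun i => κ i → ℝ) s s', Fin.cases hs hs', ?_⟩
    ext x
    simp [consTensor, Fin.prod_univ_succ, Fin.tail]
  simpa only [mul_one] using mapsTo_smul_convexHull hsign c hT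

lemma norm_toLp_mul_le {ρ : Type*} [Fintype ρ] {e : ρ → ℝ} (he : ∀ l, |e l| ≤ 1)
    (u : EuclideanSpace ℝ ρ) : ‖WithLp.toLp 2 fun l => e l * u l‖ ≤ ‖u‖ := by
  simp only [EuclideanSpace.norm_eq, norm_mul]
  gcongr with l
  exact mul_le_of_le_one_left (norm_nonneg _) (he l)

lemma IsGrothendieckConstant.sum_mul_prod_fin_two_mem {K : ℝ} (hK : IsGrothendieckConstant K)
    {ρ : Type} [Fintype ρ] {e : ρ → ℝ} (he : ∀ l, |e l| ≤ 1)
    {κ : Fin 2 → Type} [∀ i, Finite (κ i)] {U : ∀ i, κ i → EuclideanSpace ℝ ρ}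
    (hU : ∀ i a, ‖U i a‖ ≤ 1) :
    (fun x => ∑ l, e l * ∏ i, U i (x i) l) ∈ K • convexHull ℝ (signTensors κ) := by
  let toTensor : (κ 0 → κ 1 → ℝ) →ₗ[ℝ] (∀ i, κ i) → ℝ :=
    { toFun := fun m x => m (x 0) (x 1)
      map_add' := fun _ _ => rfl
      map_smul' := fun _ _ => rfl }
  have hsign : (signMatrices (κ 0) (κ 1)).MapsTo toTensor
      ((1 : ℝ) • convexHull ℝ (signTensors κ)) := by
    rintro _ ⟨s, s', hs, hs', rfl⟩
    rw [one_smul]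
    refine subset_convexHull ℝ _
      ⟨(piFinTwoEquiv fun i => κ i → ℝ).symm (s, s'), Fin.forall_fin_two.2 ⟨hs, hs'⟩, ?_⟩
    ext x
    simp [toTensor]
  have hinner := hK.2 _ _ _ (fun a => WithLp.toLp 2 fun l => e l * U 0 a l) (U 1)
    (fun a => (norm_toLp_mul_le he _).trans (hU 0 a)) (hU 1)
  convert mapsTo_smul_convexHull hsign K hinner using 1
  · rw [mul_one]
  · ext x
    simp [toTensor, PiLp.inner_apply, mul_comm, mul_assoc]

/-- In the inductive step the coefficients of the leading factor, `Uₐₗ eₗ = ⟪Uₐ, eₗ bₗ⟫` with `b`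
the standard basis, form a Grothendieck matrix. Rounding it to rank-one sign matrices `s e'ᵀ`
splits off the vector `s` and leaves a tensor of order one less with new weights `e'`, which is why
the weights `e` are carried along. -/
theorem IsGrothendieckConstant.sum_mul_prod_mem {K : ℝ} (hK : IsGrothendieckConstant K)
    {ρ : Type} [Fintype ρ] (t : ℕ) {e : ρ → ℝ} (he : ∀ l, |e l| ≤ 1)
    {κ : Fin (t + 2) → Type} [∀ i, Finite (κ i)] {U : ∀ i, κ i → EuclideanSpace ℝ ρ}
    (hU : ∀ i a, ‖U i a‖ ≤ 1) :
    (fun x => ∑ l, e l * ∏ i, U i (x i) l) ∈ K ^ (t + 1) • convexHull ℝ (signTensors κ) := by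
  induction t generalizing e with
  | zero => simpa only [zero_add, pow_one] using hK.sum_mul_prod_fin_two_mem he hU
  | succ t ih =>
    let contract : (κ 0 → ρ → ℝ) →ₗ[ℝ] (∀ i, κ i) → ℝ :=
      { toFun := fun m x => ∑ l, m (x 0) l * ∏ i : Fin (t + 2), U i.succ (x i.succ) l
        map_add' := fun m m' => by ext; simp [add_mul, Finset.sum_add_distrib]
        map_smul' := fun c m => by ext; simp [mul_assoc, Finset.mul_sum] }
    have hsign : (signMatrices (κ 0) ρ).MapsTo contract
        (K ^ (t + 1) • convexHull ℝ (signTensors κ)) := by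
      rintro _ ⟨s, e', hs, he', rfl⟩
      have he'_abs (l : ρ) : |e' l| ≤ 1 := ((abs_eq zero_le_one).2 (he' l)).le
      convert consTensor_mem_smul_convexHull hs (ih he'_abs fun i => hU i.succ) using 1
      ext x
      simp [contract, consTensor, Fin.tail, Finset.mul_sum, mul_assoc]
    have hinner := hK.2 _ _ _ (U 0) (fun l => EuclideanSpace.single l (e l)) (hU 0)
      (fun l => by simpa using he l)
    convert mapsTo_smul_convexHull hsign K hinner using 1
    · rw [← pow_succ']
    · ext x
      simp [contract, Fin.prod_univ_succ (n := t + 2), EuclideanSpace.inner_single_right,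
        mul_assoc]

lemma signNuclearNorm_le_of_mem_smul_convexHull {t : ℕ} {n : Fin t → ℕ}
    {T : (∀ i, Fin (n i)) → ℝ} {C : ℝ} (hC : 0 ≤ C)
    (hT : T ∈ C • convexHull ℝ (signTensors fun i => Fin (n i))) : signNuclearNorm T ≤ C := by
  obtain ⟨_, hconv, rfl⟩ := hT
  obtain ⟨ι, _, w, S, hw_nonneg, hw_sum, hS, rfl⟩ := mem_convexHull_iff_exists_fintype.1 hconv
  simp only [signTensors, Set.mem_ofPred_eq] at hS
  choose s hs hSs using hS
  let j := (Fintype.equivFin ι).symm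
  refine csInf_le ⟨0, ?_⟩
    ⟨Fintype.card ι, fun k => C * w (j k), fun k => s (j k), fun k => hs _, fun x => ?_, ?_⟩
  · rintro _ ⟨r, a, -, -, -, rfl⟩
    exact Finset.sum_nonneg fun _ _ => abs_nonneg _
  · rw [j.sum_comp fun k => C * w k * ∏ i, s k i (x i)]
    simp [hSs, Finset.mul_sum, mul_assoc]
  · rw [j.sum_comp fun k => |C * w k|]
    simp [abs_mul, abs_of_nonneg, hC, hw_nonneg, ← Finset.mul_sum, hw_sum]

lemma exists_norm_le_one_and_eq_smul {E : Type*} [NormedAddCommGroup E] [NormedSpace ℝ E] {u : E}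
    {R : ℝ} (hu : ‖u‖ ≤ R) : ∃ w : E, ‖w‖ ≤ 1 ∧ u = R • w := by
  rcases ((norm_nonneg u).trans hu).eq_or_lt with rfl | hR
  · exact ⟨0, by simp, by simpa using hu⟩
  · refine ⟨R⁻¹ • u, ?_, (smul_inv_smul₀ hR.ne' u).symm⟩
    rwa [norm_smul, norm_inv, Real.norm_of_nonneg hR.le, inv_mul_le_one₀ hR]

lemma norm_toLp_le_rowTwoInf {α : Type*} [Finite α] {r : ℕ} (U : α → Fin r → ℝ) (a : α) :
    ‖WithLp.toLp 2 (U a)‖ ≤ rowTwoInf U := by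
  simpa [EuclideanSpace.norm_eq, rowTwoInf] using
    le_ciSup (f := fun a => √(∑ l, U a l ^ 2)) (Set.finite_range _).bddAbove a

lemma rowTwoInf_nonneg {α : Type*} {r : ℕ} (U : α → Fin r → ℝ) : 0 ≤ rowTwoInf U :=
  Real.iSup_nonneg fun _ => Real.sqrt_nonneg _

theorem IsGrothendieckConstant.signNuclearNorm_le_prod_rowTwoInf {K : ℝ}
    (hK : IsGrothendieckConstant K) {t : ℕ} (ht : 2 ≤ t) {n : Fin t → ℕ} {r : ℕ}
    (U : ∀ i, Fin (n i) → Fin r → ℝ) :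
    signNuclearNorm (fun x => ∑ l, ∏ i, U i (x i) l) ≤ K ^ (t - 1) * ∏ i, rowTwoInf (U i) := by
  obtain ⟨t, rfl⟩ := Nat.exists_eq_add_of_le' ht
  have hR : 0 ≤ ∏ i, rowTwoInf (U i) := Finset.prod_nonneg fun i _ => rowTwoInf_nonneg _
  choose W hW hUW using fun i a => exists_norm_le_one_and_eq_smul (norm_toLp_le_rowTwoInf (U i) a)
  have hU (i a l) : U i a l = rowTwoInf (U i) * W i a l := congrArg (· l) (hUW i a)
  have hT : (fun x : ∀ i, Fin (n i) => ∑ l, ∏ i, U i (x i) l) =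
      (∏ i, rowTwoInf (U i)) • fun x => ∑ l, 1 * ∏ i, W i (x i) l := by
    ext x
    simp [hU, Finset.prod_mul_distrib, Finset.mul_sum]
  rw [hT]
  refine signNuclearNorm_le_of_mem_smul_convexHull (mul_nonneg (pow_nonneg hK.1 _) hR) ?_
  rw [mul_comm, mul_smul]
  exact Set.smul_mem_smul_set (hK.sum_mul_prod_mem t (by simp) hW)

lemma exists_factorization {t : ℕ} (ht : 0 < t) {n : Fin t → ℕ} (T : (∀ i, Fin (n i)) → ℝ) :
    ∃ (r : ℕ) (U : ∀ i, Fin (n i) → Fin r → ℝ), ∀ x, T x = ∑ l, ∏ i, U i (x i) l := by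
  let y := (Fintype.equivFin (∀ i, Fin (n i))).symm
  refine ⟨_, fun i a l =>
    Pi.mulSingle (M := fun _ => ℝ) ⟨0, ht⟩ (T (y l)) i * if a = y l i then 1 else 0, fun x => ?_⟩
  rw [y.sum_comp fun z => ∏ i, Pi.mulSingle (M := fun _ => ℝ) ⟨0, ht⟩ (T z) i *
    if x i = z i then 1 else 0]
  simp only [Finset.prod_mul_distrib, Fintype.prod_boole, ← funext_iff]
  simp

theorem IsGrothendieckConstant.signNuclearNorm_le_pow_mul_maxQnorm {K : ℝ}
    (hK : IsGrothendieckConstant K) {t : ℕ} (ht : 2 ≤ t) {n : Fin t → ℕ}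
    (T : (∀ i, Fin (n i)) → ℝ) :
    signNuclearNorm T ≤ K ^ (t - 1) * maxQnorm T := by
  obtain ⟨r₀, U₀, hU₀⟩ := exists_factorization (two_pos.trans_le ht) T
  rw [maxQnorm, ← smul_eq_mul, ← Real.sInf_smul_of_nonneg (pow_nonneg hK.1 _)]
  refine le_csInf (Set.Nonempty.smul_set ⟨_, r₀, U₀, hU₀, rfl⟩) ?_
  rintro _ ⟨_, ⟨r, U, hU, rfl⟩, rfl⟩
  rw [funext hU]
  exact hK.signNuclearNorm_le_prod_rowTwoInf ht U

/-- Multilinear Grothendieck bound relating the sign nuclear norm and the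
max-quasinorm: `‖T‖_± ≤ K_G^{t−1}·‖T‖_max ≤ 1.783^{t−1}·‖T‖_max`. -/
theorem signNuclearNorm_le_maxQnorm (t : ℕ) (ht : 2 ≤ t) (n : Fin t → ℕ)
    (T : ((i : Fin t) → Fin (n i)) → ℝ) :
    signNuclearNorm T ≤ 1.783 ^ (t - 1) * maxQnorm T :=
  isGrothendieckConstant_krivine.signNuclearNorm_le_pow_mul_maxQnorm ht T
end

section
/- Let t ≥ 2 and let T ∈ ℝ^{n_1 × ⋯ × n_t} be an order-t tensor of CP rank r with |T|_∞ ≤ 1. Then T admits a decomposition into r^{t−1} rank-one tensors, T = Σ_{j=1}^{r^{t−1}} u_j^1 ∘ u_j^2 ∘ ⋯ ∘ u_j^t, such that for every 1 ≤ k ≤ t−1 and every coordinate 1 ≤ s ≤ n_k one has Σ_{j=1}^{r^{t−1}} (u_j^k(s))² ≤ r^{t−1}, and for every coordinate 1 ≤ s ≤ n_t one has Σ_{j=1}^{r^{t−1}} (u_j^t(s))² ≤ r^{t−2}. -/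
open Classical

/-- The CP rank of an order-`t` tensor: the minimal number `r` of rank-one
terms summing to `T`. -/
noncomputable def cpRank {t : ℕ} {n : Fin t → ℕ}
    (T : ((i : Fin t) → Fin (n i)) → ℝ) : ℕ :=
  sInf { r : ℕ | ∃ U : (i : Fin t) → Fin (n i) → Fin r → ℝ,
    ∀ x, T x = ∑ l : Fin r, ∏ i, U i (x i) l }

/-!
For each mode `k < t`, let `W` be the `d`-dimensional space of functions on the coordinates of
mode `k` spanned by the factors of a given decomposition, so that `d ≤ r`. Among all probability
weights `p` choose one maximising the determinant of the Gram matrix of a basis of `W` in `L²(p)`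
(a D-optimal design, as in the Kiefer–Wolfowitz theorem), and let `A₁, …, A_d` be an orthonormal
basis of `W` in `L²(p)`. Adding mass `τ` at a point `a` and renormalising multiplies the
determinant by `(1 + τ ∑ᵢ Aᵢ(a)²) / (1 + τ) ^ d`. By maximality this is at most `1`, and `τ → 0`
gives `∑ᵢ Aᵢ(a)² ≤ d` at every point `a`.

The tensor products of these bases over the first `t - 1` modes are at most `r ^ (t - 1)` functions,
orthonormal for the product weight, and each slice of `T` at a coordinate `s` of the last mode is a
combination of them. The coefficients form the factors of the last mode: by Parseval their squares
sum to the weighted mean of the squared entries of the slice, which is at most `1`.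
-/

open Matrix

lemma sum_comp_eval {κ M : Type*} [Fintype κ] [DecidableEq κ] {ι : κ → Type*}
    [∀ k, Fintype (ι k)] [AddCommMonoid M] (k : κ) (g : ι k → M) :
    ∑ J : ∀ k, ι k, g (J k) = Fintype.card (∀ j : {j // j ≠ k}, ι j) • ∑ i, g i := by
  rw [← (Equiv.piSplitAt k ι).symm.sum_comp, Fintype.sum_prod_type_right]
  simp only [Equiv.piSplitAt_symm_apply, dif_pos, Finset.sum_const, Finset.card_univ]

lemma sum_comp_eval_le_card {κ R : Type*} [Fintype κ] [DecidableEq κ] {ι : κ → Type*}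
    [∀ k, Fintype (ι k)] [Semiring R] [PartialOrder R] [IsOrderedRing R] {k : κ} {g : ι k → R}
    (hg : ∑ i, g i ≤ Fintype.card (ι k)) :
    ∑ J : ∀ k, ι k, g (J k) ≤ Fintype.card (∀ k, ι k) := by
  calc ∑ J : ∀ k, ι k, g (J k)
      ≤ Fintype.card (∀ j : {j // j ≠ k}, ι j) • (Fintype.card (ι k) : R) := by
        rw [sum_comp_eval]
        exact nsmul_le_nsmul_right hg _
    _ = Fintype.card (∀ k, ι k) := by
        simpa using (sum_comp_eval k fun _ : ι k => (1 : R)).symm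

lemma sum_extend_zero {ι κ M N : Type*} [Fintype ι] [Fintype κ] [Zero M] [AddCommMonoid N]
    {e : ι → κ} (he : Function.Injective e) (g : ι → M) {F : M → N} (hF : F 0 = 0) :
    ∑ j, F (Function.extend e g 0 j) = ∑ i, F (g i) :=
  (Fintype.sum_of_injective e he _ _
    (fun j hj => by rw [Function.extend_apply' _ _ _ hj, Pi.zero_apply, hF])
    fun i => by rw [he.extend_apply]).symm

lemma le_natCast_of_forall_one_add_mul_le_pow {q : ℝ} {d : ℕ}
    (h : ∀ τ : ℝ, 0 < τ → 1 + τ * q ≤ (1 + τ) ^ d) : q ≤ d := by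
  have hderiv : HasDerivAt (fun τ : ℝ => (1 + τ) ^ d) d 0 := by
    simpa using ((hasDerivAt_id (0 : ℝ)).const_add 1).fun_pow d
  refine ge_of_tendsto hderiv.tendsto_slope_zero_right ?_
  filter_upwards [self_mem_nhdsWithin] with τ (hτ : 0 < τ)
  simp only [zero_add, add_zero, one_pow, smul_eq_mul]
  rw [le_inv_mul_iff₀ hτ]
  linarith [h τ hτ]

lemma span_range_row_mul_le {R κ ι α : Type*} [CommSemiring R] [Fintype ι]
    (C : Matrix κ ι R) (A : Matrix ι α R) :
    Submodule.span R (Set.range (C * A).row) ≤ Submodule.span R (Set.range A.row) := by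
  rw [Submodule.span_le, ← range_vecMulLinear]
  rintro _ ⟨k, rfl⟩
  exact ⟨C k, (mul_apply_eq_vecMul C A k).symm⟩

open MatrixOrder in
lemma exists_mul_mul_transpose_eq_one {ι : Type*} [Fintype ι] [DecidableEq ι]
    {S : Matrix ι ι ℝ} (hS : S.PosDef) :
    ∃ C : Matrix ι ι ℝ, IsUnit C.det ∧ C * S * Cᵀ = 1 := by
  obtain ⟨B, rfl⟩ := CStarAlgebra.nonneg_iff_eq_star_mul_self.1 hS.posSemidef.nonneg
  have hB : IsUnit B.det := isUnit_iff_ne_zero.2 fun h => hS.det_pos.ne' (by simp [h])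
  have hBt : IsUnit Bᵀ.det := by rwa [det_transpose]
  refine ⟨Bᵀ⁻¹, isUnit_nonsing_inv_det _ hBt, ?_⟩
  rw [star_eq_conjTranspose, conjTranspose_eq_transpose_of_trivial, transpose_nonsing_inv,
    transpose_transpose, nonsing_inv_mul_cancel_left _ _ hBt, mul_nonsing_inv _ hB]

/-- The Gram matrix of the rows of `A`, seen as functions on `α`, for the bilinear form
`⟨f, g⟩ = ∑ a, p a * f a * g a` given by the weight `p`. -/
def weightedGram {R ι α : Type*} [CommSemiring R] [Fintype α] [DecidableEq α]
    (p : α → R) (A : Matrix ι α R) : Matrix ι ι R :=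
  A * diagonal p * Aᵀ

section WeightedGram

variable {R ι α : Type*} [CommSemiring R] [Fintype α] [DecidableEq α]

lemma weightedGram_apply (p : α → R) (A : Matrix ι α R) (i j : ι) :
    weightedGram p A i j = ∑ a, A i a * p a * A j a := by
  rw [weightedGram, Matrix.mul_apply]
  simp only [mul_diagonal, transpose_apply]

lemma weightedGram_smul (c : R) (p : α → R) (A : Matrix ι α R) :
    weightedGram (c • p) A = c • weightedGram p A := by
  simp [weightedGram, diagonal_smul]

lemma weightedGram_add_single (p : α → R) (a : α) (τ : R) (A : Matrix ι α R) :
    weightedGram (p + Pi.single a τ) A = weightedGram p A + τ • vecMulVec (Aᵀ a) (Aᵀ a) := by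
  ext i j
  simp [weightedGram_apply, mul_add, add_mul, Finset.sum_add_distrib, vecMulVec_apply,
    Pi.single_apply, mul_left_comm, mul_assoc]

variable [Fintype ι]

lemma weightedGram_mul {κ : Type*} (p : α → R) (C : Matrix κ ι R) (A : Matrix ι α R) :
    weightedGram p (C * A) = C * weightedGram p A * Cᵀ := by
  simp only [weightedGram, transpose_mul, Matrix.mul_assoc]

lemma sum_weight_mul_vecMul_sq (p : α → R) (A : Matrix ι α R) (c : ι → R) :
    ∑ a, p a * (c ᵥ* A) a ^ 2 = c ⬝ᵥ weightedGram p A *ᵥ c := by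
  rw [weightedGram, ← mulVec_mulVec, ← mulVec_mulVec, dotProduct_mulVec, mulVec_transpose]
  simp only [dotProduct, mulVec_diagonal]
  exact Finset.sum_congr rfl fun a _ => by ring

end WeightedGram

lemma det_weightedGram_mul {R ι α : Type*} [CommRing R] [Fintype α] [DecidableEq α]
    [Fintype ι] [DecidableEq ι] (p : α → R) (C : Matrix ι ι R) (A : Matrix ι α R) :
    (weightedGram p (C * A)).det = C.det ^ 2 * (weightedGram p A).det := by
  rw [weightedGram_mul, det_mul, det_mul, det_transpose]
  ring

section OptimalDesign

variable {ι α : Type*} [Fintype α] [DecidableEq α]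

lemma posSemidef_weightedGram [Finite ι] {p : α → ℝ} (hp : 0 ≤ p) (A : Matrix ι α ℝ) :
    (weightedGram p A).PosSemidef :=
  (PosSemidef.diagonal hp).mul_mul_conjTranspose_same A

lemma posDef_weightedGram [Finite ι] {p : α → ℝ} (hp : ∀ a, 0 < p a) {A : Matrix ι α ℝ}
    (hA : LinearIndependent ℝ A.row) : (weightedGram p A).PosDef := by
  have := Fintype.ofFinite ι
  exact (PosDef.diagonal hp).mul_mul_conjTranspose_same (vecMul_injective_iff.2 hA)

variable [Fintype ι] [DecidableEq ι]

lemma exists_isMaxOn_det_weightedGram [Nonempty α] {A : Matrix ι α ℝ}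
    (hA : LinearIndependent ℝ A.row) :
    ∃ p ∈ stdSimplex ℝ α, (weightedGram p A).PosDef ∧
      IsMaxOn (fun q => (weightedGram q A).det) (stdSimplex ℝ α) p := by
  have hcont : Continuous fun q : α → ℝ => (weightedGram q A).det := by
    unfold weightedGram
    fun_prop
  let uniform : α → ℝ := fun _ => (Fintype.card α : ℝ)⁻¹
  have huniform : uniform ∈ stdSimplex ℝ α := ⟨fun _ => by positivity, by simp [uniform]⟩
  obtain ⟨p, hp, hmax⟩ :=
    (isCompact_stdSimplex ℝ α).exists_isMaxOn ⟨uniform, huniform⟩ hcont.continuousOn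
  have hdet : 0 < (weightedGram p A).det :=
    (posDef_weightedGram (p := uniform) (fun _ => by positivity) hA).det_pos.trans_le
      (hmax huniform)
  exact ⟨p, hp, (posSemidef_weightedGram hp.1 A).posDef_iff_det_ne_zero.2 hdet.ne', hmax⟩

lemma sum_sq_le_card_of_det_weightedGram_le_one {p : α → ℝ} (hp : p ∈ stdSimplex ℝ α)
    {A : Matrix ι α ℝ} (hA : weightedGram p A = 1)
    (hmax : ∀ q ∈ stdSimplex ℝ α, (weightedGram q A).det ≤ 1) (a : α) :
    ∑ i, A i a ^ 2 ≤ Fintype.card ι := by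
  refine le_natCast_of_forall_one_add_mul_le_pow fun τ hτ => ?_
  have hq : (1 + τ)⁻¹ • (p + Pi.single a τ) ∈ stdSimplex ℝ α := by
    refine ⟨fun b => mul_nonneg (by positivity) (add_nonneg (hp.1 b) ?_), ?_⟩
    · exact (Pi.single_nonneg.2 hτ.le : 0 ≤ (Pi.single a τ : α → ℝ)) b
    · simp only [Pi.smul_apply, Pi.add_apply, smul_eq_mul, ← Finset.mul_sum,
        Finset.sum_add_distrib, hp.2, Finset.sum_pi_single', Finset.mem_univ, if_true]
      field_simp
  have hdet := hmax _ hq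
  rw [weightedGram_smul, weightedGram_add_single, hA, det_smul, inv_pow,
    inv_mul_le_iff₀ (by positivity), mul_one, ← smul_vecMulVec, vecMulVec_eq Unit,
    det_one_add_replicateCol_mul_replicateRow, dotProduct_smul] at hdet
  simpa [dotProduct, sq] using hdet

theorem exists_weightedGram_eq_one_sum_sq_le [Nonempty α] {M : Matrix ι α ℝ}
    (hM : LinearIndependent ℝ M.row) :
    ∃ p ∈ stdSimplex ℝ α, ∃ A : Matrix ι α ℝ,
      Submodule.span ℝ (Set.range A.row) = Submodule.span ℝ (Set.range M.row) ∧
      weightedGram p A = 1 ∧ ∀ a, ∑ i, A i a ^ 2 ≤ Fintype.card ι := by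
  obtain ⟨p, hp, hpos, hmax⟩ := exists_isMaxOn_det_weightedGram hM
  obtain ⟨C, hC, hgram⟩ := exists_mul_mul_transpose_eq_one hpos
  rw [← weightedGram_mul] at hgram
  refine ⟨p, hp, C * M, (span_range_row_mul_le C M).antisymm ?_, hgram,
    sum_sq_le_card_of_det_weightedGram_le_one hp hgram fun q hq => ?_⟩
  · simpa only [nonsing_inv_mul_cancel_left _ _ hC] using span_range_row_mul_le C⁻¹ (C * M)
  · calc (weightedGram q (C * M)).det = C.det ^ 2 * (weightedGram q M).det :=
          det_weightedGram_mul q C M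
      _ ≤ C.det ^ 2 * (weightedGram p M).det := mul_le_mul_of_nonneg_left (hmax hq) (sq_nonneg _)
      _ = 1 := by rw [← det_weightedGram_mul, hgram, det_one]

theorem exists_weightedGram_eq_one_span_eq (W : Submodule ℝ (α → ℝ)) :
    ∃ p : α → ℝ, 0 ≤ p ∧ ∑ a, p a ≤ 1 ∧ ∃ A : Matrix (Fin (Module.finrank ℝ W)) α ℝ,
      Submodule.span ℝ (Set.range A.row) = W ∧ weightedGram p A = 1 ∧
      ∀ a, ∑ i, A i a ^ 2 ≤ Module.finrank ℝ W := by
  let b := Module.finBasis ℝ W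
  let M : Matrix (Fin (Module.finrank ℝ W)) α ℝ := of fun i => b i
  have hspan : Submodule.span ℝ (Set.range M.row) = W := by
    have h := congrArg (Submodule.map W.subtype) b.span_eq
    rwa [Submodule.map_span, ← Set.range_comp, Submodule.map_subtype_top] at h
  have hM : LinearIndependent ℝ M.row := b.linearIndependent.map' W.subtype W.ker_subtype
  cases isEmpty_or_nonempty α
  · have : IsEmpty (Fin (Module.finrank ℝ W)) := by
      simp [Module.finrank_zero_of_subsingleton, Fin.isEmpty']
    exact ⟨0, le_rfl, by simp, M, hspan, Subsingleton.elim _ _, isEmptyElim⟩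
  · obtain ⟨p, hp, A, hA, hgram, hle⟩ := exists_weightedGram_eq_one_sum_sq_le hM
    exact ⟨p, hp.1, hp.2.le, A, hA.trans hspan, hgram, by simpa using hle⟩

end OptimalDesign

/-- The rank-one tensor `⨂ k, v k`, as a function of its multi-index. -/
def pureTensor {R κ : Type*} [CommMonoid R] [Fintype κ] {α : κ → Type*}
    (v : ∀ k, α k → R) : (∀ k, α k) → R :=
  fun x => ∏ k, v k (x k)

/-- The Kronecker product of a finite family of matrices, whose row `J` is the rank-one tensor
formed by the rows `J k` of the factors `A k`. -/
def piKronecker {R κ : Type*} [CommMonoid R] [Fintype κ] {ι α : κ → Type*}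
    (A : ∀ k, Matrix (ι k) (α k) R) : Matrix (∀ k, ι k) (∀ k, α k) R :=
  of fun J => pureTensor fun k => A k (J k)

/-- The tensor product `⨂ k, W k` of spaces `W k` of functions on `α k`, realised as the space of
functions on `∀ k, α k` spanned by the rank-one tensors with factors in the `W k`. -/
def tensorSpan {R κ : Type*} [CommSemiring R] [Fintype κ] {α : κ → Type*}
    (W : ∀ k, Submodule R (α k → R)) : Submodule R ((∀ k, α k) → R) :=
  Submodule.span R (Set.range fun v : ∀ k, W k => pureTensor fun k => (v k : α k → R))

section PiKronecker

variable {R κ : Type*} [CommSemiring R] [Fintype κ] {ι α β : κ → Type*}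

lemma piKronecker_diagonal [∀ k, DecidableEq (α k)] (p : ∀ k, α k → R) :
    (piKronecker fun k => diagonal (p k)) = diagonal (pureTensor p) := by
  ext x y
  rcases eq_or_ne x y with rfl | hxy
  · simp [piKronecker, pureTensor]
  · obtain ⟨k, hk⟩ := Function.ne_iff.1 hxy
    rw [diagonal_apply_ne _ hxy]
    exact Finset.prod_eq_zero (Finset.mem_univ k) (diagonal_apply_ne _ hk)

lemma piKronecker_one [∀ k, DecidableEq (α k)] :
    (piKronecker fun k => (1 : Matrix (α k) (α k) R)) = 1 := by
  simp only [← diagonal_one, piKronecker_diagonal]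
  exact congrArg diagonal (funext fun _ => Finset.prod_const_one)

variable [DecidableEq κ]

lemma sum_pureTensor [∀ k, Fintype (α k)] (v : ∀ k, α k → R) :
    ∑ x, pureTensor v x = ∏ k, ∑ a, v k a :=
  (Fintype.prod_sum v).symm

lemma piKronecker_mul [∀ k, Fintype (α k)] (A : ∀ k, Matrix (ι k) (α k) R)
    (B : ∀ k, Matrix (α k) (β k) R) :
    (piKronecker fun k => A k * B k) = piKronecker A * piKronecker B := by
  ext I J
  simp only [piKronecker, pureTensor, of_apply, mul_apply, ← Finset.prod_mul_distrib,
    Fintype.prod_sum]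

lemma weightedGram_piKronecker [∀ k, Fintype (α k)] [∀ k, DecidableEq (α k)]
    (p : ∀ k, α k → R) (A : ∀ k, Matrix (ι k) (α k) R) :
    weightedGram (pureTensor p) (piKronecker A) =
      piKronecker fun k => weightedGram (p k) (A k) := by
  simp only [weightedGram, piKronecker_mul, piKronecker_diagonal]
  rfl

lemma pureTensor_vecMul_piKronecker [∀ k, Fintype (ι k)] (c : ∀ k, ι k → R)
    (A : ∀ k, Matrix (ι k) (α k) R) :
    pureTensor c ᵥ* piKronecker A = pureTensor fun k => c k ᵥ* A k := by
  ext x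
  simp only [vecMul, dotProduct, piKronecker, pureTensor, of_apply, ← Finset.prod_mul_distrib,
    Fintype.prod_sum]

end PiKronecker

lemma tensorSpan_span_range_row_le {R κ : Type*} [CommSemiring R] [Fintype κ] {ι α : κ → Type*}
    [∀ k, Finite (ι k)] (A : ∀ k, Matrix (ι k) (α k) R) :
    tensorSpan (fun k => Submodule.span R (Set.range (A k).row)) ≤
      Submodule.span R (Set.range (piKronecker A).row) := by
  classical
  have := fun k => Fintype.ofFinite (ι k)
  refine Submodule.span_le.2 ?_
  rintro _ ⟨v, rfl⟩
  have hv : ∀ k, ∃ c, c ᵥ* A k = v k := fun k => by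
    simpa [← range_vecMulLinear] using (v k).2
  choose c hc using hv
  rw [SetLike.mem_coe, ← range_vecMulLinear]
  exact ⟨pureTensor c, by simp [pureTensor_vecMul_piKronecker, hc]⟩

lemma sum_smul_pureTensor_mem_tensorSpan {R κ σ : Type*} [CommSemiring R] [Fintype κ]
    [Fintype σ] {α : κ → Type*} (w : σ → R) (v : ∀ k, σ → α k → R) :
    ∑ l, w l • pureTensor (fun k => v k l) ∈
      tensorSpan fun k => Submodule.span R (Set.range (v k)) :=
  Submodule.sum_mem _ fun l _ => Submodule.smul_mem _ _ <| Submodule.subset_span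
    ⟨fun k => ⟨v k l, Submodule.subset_span ⟨l, rfl⟩⟩, rfl⟩

theorem exists_bounded_tucker_decomposition {κ β : Type*} [Fintype κ] [DecidableEq κ]
    {α : κ → Type*} [∀ k, Finite (α k)] (W : ∀ k, Submodule ℝ (α k → ℝ))
    (T : β → (∀ k, α k) → ℝ) (hT : ∀ s, T s ∈ tensorSpan W) (hT_le : ∀ s y, |T s y| ≤ 1) :
    ∃ (A : ∀ k, Matrix (Fin (Module.finrank ℝ (W k))) (α k) ℝ)
      (c : β → (∀ k, Fin (Module.finrank ℝ (W k))) → ℝ),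
      (∀ s, c s ᵥ* piKronecker A = T s) ∧
      (∀ k a, ∑ i, A k i a ^ 2 ≤ Module.finrank ℝ (W k)) ∧
      ∀ s, ∑ J, c s J ^ 2 ≤ 1 := by
  classical
  have := fun k => Fintype.ofFinite (α k)
  choose p hp hp_sum A hspan hgram hA using fun k => exists_weightedGram_eq_one_span_eq (W k)
  have hc : ∀ s, ∃ c, c ᵥ* piKronecker A = T s := fun s => by
    have h := tensorSpan_span_range_row_le A (by simpa only [hspan] using hT s)
    simpa [← range_vecMulLinear] using h
  choose c hc using hc
  refine ⟨A, c, hc, hA, fun s => ?_⟩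
  have hP : ∀ y, 0 ≤ pureTensor p y := fun y => Finset.prod_nonneg fun k _ => hp k (y k)
  calc ∑ J, c s J ^ 2 = c s ⬝ᵥ weightedGram (pureTensor p) (piKronecker A) *ᵥ c s := by
        simp [weightedGram_piKronecker, hgram, piKronecker_one, dotProduct, sq]
    _ = ∑ y, pureTensor p y * T s y ^ 2 := by rw [← sum_weight_mul_vecMul_sq, hc]
    _ ≤ ∑ y, pureTensor p y := Finset.sum_le_sum fun y _ =>
        mul_le_of_le_one_right (hP y) ((sq_le_one_iff_abs_le_one _).2 (hT_le s y))
    _ = ∏ k, ∑ a, p k a := sum_pureTensor p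
    _ ≤ 1 := Finset.prod_le_one (fun k _ => Finset.sum_nonneg fun a _ => hp k a)
        fun k _ => hp_sum k

theorem bounded_decomposition_of_rank_general {m r : ℕ} {α : Fin (m + 1) → Type*}
    [∀ k : Fin m, Finite (α k.castSucc)] (T : (∀ i, α i) → ℝ) (U : ∀ i, α i → Fin r → ℝ)
    (hU : ∀ x, T x = ∑ l, ∏ i, U i (x i) l) (hinf : ∀ x, |T x| ≤ 1) :
    ∃ u : Fin (r ^ m) → ∀ i, α i → ℝ,
      (∀ x, T x = ∑ j, ∏ i, u j i (x i)) ∧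
      (∀ (k : Fin m) (s : α k.castSucc), ∑ j, u j k.castSucc s ^ 2 ≤ (r : ℝ) ^ m) ∧
      ∀ s : α (Fin.last m), ∑ j, u j (Fin.last m) s ^ 2 ≤ 1 := by
  let W (k : Fin m) : Submodule ℝ (α k.castSucc → ℝ) :=
    Submodule.span ℝ (Set.range fun l a => U k.castSucc a l)
  have hW (k : Fin m) : Module.finrank ℝ (W k) ≤ r :=
    (finrank_range_le_card _).trans_eq (Fintype.card_fin r)
  have hT (s : α (Fin.last m)) :
      (fun y : ∀ k : Fin m, α k.castSucc => T (Fin.snoc y s)) ∈ tensorSpan W := by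
    convert sum_smul_pureTensor_mem_tensorSpan (fun l => U (Fin.last m) s l)
      fun (k : Fin m) l a => U k.castSucc a l
    simp [hU, pureTensor, Fin.prod_univ_castSucc, mul_comm]
  obtain ⟨A, c, hc, hA, hc_sum⟩ :=
    exists_bounded_tucker_decomposition W _ hT fun s y => hinf (Fin.snoc y s)
  have hcard : Fintype.card (∀ k, Fin (Module.finrank ℝ (W k))) ≤ r ^ m := by
    simpa using Finset.prod_le_pow_card (Finset.univ : Finset (Fin m)) _ r fun k _ => hW k
  obtain ⟨e⟩ : Nonempty ((∀ k, Fin (Module.finrank ℝ (W k))) ↪ Fin (r ^ m)) :=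
    Function.Embedding.nonempty_of_card_le (by rwa [Fintype.card_fin])
  let v (J : ∀ k, Fin (Module.finrank ℝ (W k))) : ∀ i, α i → ℝ :=
    Fin.snoc (α := fun i => α i → ℝ) (fun k => A k (J k)) fun s => c s J
  refine ⟨Function.extend e v 0, fun x => ?_, fun k s => ?_, fun s => ?_⟩
  · rw [sum_extend_zero e.injective v (F := fun w => ∏ i, w i (x i)) (by simp),
      ← Fin.snoc_init_self x, ← congrFun (hc _) _]
    simp [v, vecMul, dotProduct, piKronecker, pureTensor, Fin.prod_univ_castSucc, Fin.init,
      mul_comm]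
  · rw [sum_extend_zero e.injective v (F := fun w => w k.castSucc s ^ 2) (by simp)]
    simp only [v, Fin.snoc_castSucc]
    exact (sum_comp_eval_le_card (k := k) (ι := fun k => Fin (Module.finrank ℝ (W k)))
      (g := fun i => A k i s ^ 2) (by simpa using hA k s)).trans
      (by exact_mod_cast hcard)
  · rw [sum_extend_zero e.injective v (F := fun w => w (Fin.last m) s ^ 2) (by simp)]
    simpa [v] using hc_sum s

lemma exists_eq_sum_prod {R κ : Type*} [CommSemiring R] [Fintype κ] [Nonempty κ]
    {α : κ → Type*} [∀ i, Finite (α i)] (T : (∀ i, α i) → R) :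
    ∃ (r : ℕ) (U : ∀ i, α i → Fin r → R), ∀ x, T x = ∑ l, ∏ i, U i (x i) l := by
  classical
  have := Fintype.ofFinite (∀ i, α i)
  obtain ⟨i₀⟩ := ‹Nonempty κ›
  let e := (Fintype.equivFin (∀ i, α i)).symm
  refine ⟨_, fun i a l => (if i = i₀ then T (e l) else 1) * if e l i = a then 1 else 0,
    fun x => ?_⟩
  rw [e.sum_comp fun y => ∏ i, (if i = i₀ then T y else 1) * if y i = x i then 1 else 0,
    Finset.sum_eq_single_of_mem x (Finset.mem_univ x)]
  · simp
  · intro y _ hy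
    obtain ⟨i, hi⟩ := Function.ne_iff.1 hy
    exact Finset.prod_eq_zero (Finset.mem_univ i) (by simp [hi])

lemma exists_eq_sum_prod_cpRank {t : ℕ} [NeZero t] {n : Fin t → ℕ}
    (T : ((i : Fin t) → Fin (n i)) → ℝ) :
    ∃ U : (i : Fin t) → Fin (n i) → Fin (cpRank T) → ℝ,
      ∀ x, T x = ∑ l, ∏ i, U i (x i) l :=
  Nat.sInf_mem (exists_eq_sum_prod T)

/-- Any rank-`r` order-`t` tensor with `|T|_∞ ≤ 1` decomposes into `r^{t−1}`
rank-one tensors whose factors have columnwise squared sums bounded by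
`r^{t−1}` in the first `t−1` modes and by `r^{t−2}` in the last mode. -/
theorem bounded_decomposition_of_rank (t : ℕ) (ht : 2 ≤ t)
    (n : Fin t → ℕ) (r : ℕ)
    (T : ((i : Fin t) → Fin (n i)) → ℝ)
    (hrank : cpRank T = r) (hinf : ∀ x, |T x| ≤ 1) :
    ∃ u : Fin (r ^ (t - 1)) → (i : Fin t) → Fin (n i) → ℝ,
      (∀ x, T x = ∑ j, ∏ i, u j i (x i)) ∧
      (∀ i : Fin t, (i : ℕ) < t - 1 → ∀ s : Fin (n i),
        ∑ j, (u j i s) ^ 2 ≤ (r : ℝ) ^ (t - 1)) ∧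
      (∀ s : Fin (n ⟨t - 1, by omega⟩),
        ∑ j, (u j ⟨t - 1, by omega⟩ s) ^ 2 ≤ (r : ℝ) ^ (t - 2)) := by
  obtain ⟨m, rfl⟩ := Nat.exists_eq_add_of_le' ht
  obtain ⟨U, hU⟩ := hrank ▸ exists_eq_sum_prod_cpRank T
  obtain ⟨u, hu, hinit, hlast⟩ := bounded_decomposition_of_rank_general T U hU hinf
  refine ⟨u, hu, fun i hi => hinit ⟨i, hi⟩, fun s => ?_⟩
  rcases r.eq_zero_or_pos with rfl | hr
  · have : IsEmpty (Fin (0 ^ (m + 2 - 1))) := by simpa using Fin.isEmpty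
    exact (Fintype.sum_empty _).trans_le (by positivity)
  · exact (hlast s).trans (one_le_pow₀ (by exact_mod_cast hr))
end
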